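/- Let $U=\{1,\dots,n\}$ be a set of items with utilities $u_1,\dots,u_n\in\mathbb{R}$. A length-$k$ ranking is a tuple $r=(r_1,\dots,r_k)$ of $k$ distinct items of $U$, and for $C\subseteq U$ its Plackett–Luce probability is $$\Pr\nolimits_{\mathrm{PL}}(r\mid C)=\prod_{t=1}^{k}\frac{\exp(u_{r_t})}{\sum_{m\in C\setminus\{r_1,\dots,r_{t-1}\}}\exp(u_m)}$$ if $\{r_1,\dots,r_k\}\subseteq C$, and $\Pr_{\mathrm{PL}}(r\mid C)=0$ otherwise; for a set $R$ of length-$k$ rankings, $\Pr_{\mathrm{PL}}(R\mid C)=\sum_{r\in R}\Pr_{\mathrm{PL}}(r\mid C)$. Let $R_{i\le \ell}$ be the set of length-$k$ rankings with item $i$ in one of the top $\ell$ positions. Let $i,j\in U$ with $u_i>u_j$, let $C\subseteq U$ with $i\in C$ and $j\notin C$, let $C_{i\to j}=(C\setminus\{i\})\cup\{j\}$, and let $0\le\ell\le k\le |C|$. Then item $i$ is at least as likely to appear in the top $\ell$ positions of a length-$k$ ranking with consideration set $C$ as $j$ is with consideration set $C_{i\to j}$: $$\Pr\nolimits_{\mathrm{PL}}(R_{i\le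 \ell}\mid C)\ \ge\ \Pr\nolimits_{\mathrm{PL}}(R_{j\le \ell}\mid C_{i\to j}),$$ and the inequality is strict whenever $1\le \ell<|C|$. -/

import Mathlib

noncomputable section

/-- Plackett–Luce probability of the length-`k` ranking `r` (an injective tuple of items)
with utilities `u` and consideration set `C`. The items ranked before position `t` are
`(Finset.Iio t).image r`. -/
def prPL (n k : ℕ) (u : Fin n → ℝ) (r : Fin k ↪ Fin n) (C : Finset (Fin n)) : ℝ :=
  if ∀ t : Fin k, r t ∈ C then
    ∏ t : Fin k, Real.exp (u (r t)) /
      ∑ j ∈ C \ (Finset.Iio t).image r, Real.exp (u j)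
  else 0

/-- Plackett–Luce probability of a set of length-`k` rankings. -/
def prPLset (n k : ℕ) (u : Fin n → ℝ) (R : Finset (Fin k ↪ Fin n)) (C : Finset (Fin n)) : ℝ :=
  ∑ r ∈ R, prPL n k u r C

/-- The set of length-`k` rankings with item `i` in one of the top `ℓ` positions
(positions are numbered from `0`). -/
def topSet (n k : ℕ) (i : Fin n) (ℓ : ℕ) : Finset (Fin k ↪ Fin n) :=
  Finset.univ.filter (fun r => ∃ t : Fin k, (t : ℕ) < ℓ ∧ r t = i)

end

/-!
The conditional probabilities of the last choice add up to one, so a ranking may be cut off after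
its first `ℓ` positions. The complementary event is the easier one to compare: `i` is missed when
all `ℓ` choices come from `D = C \ {i}`, which has as probability a sum of products of factors
`exp (u a) / (exp (u i) + S)`, where `S` is the total weight of the remaining items of `D`.
Replacing `i` by `j` leaves `D` alone and changes only the term `exp (u i)` in the denominators;
lowering it makes every factor larger.
-/

theorem sum_apply_last_of_init_eq {α M : Type*} [Fintype α] [DecidableEq α] [AddCommMonoid M]
    {k : ℕ} (e : Fin k ↪ α) (f : α → M) :
    ∑ r : Fin (k + 1) ↪ α with Fin.Embedding.init r = e, f (r (Fin.last k)) =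
      ∑ a ∈ (Finset.univ.image e)ᶜ, f a := by
  refine Finset.sum_bij (fun r _ => r (Fin.last k)) ?_ ?_ ?_ fun _ _ => rfl
  · intro r hr
    obtain rfl : Fin.Embedding.init r = e := (Finset.mem_filter.1 hr).2
    refine Finset.mem_compl.2 fun hmem => ?_
    obtain ⟨t, -, ht⟩ := Finset.mem_image.1 hmem
    exact Fin.castSucc_ne_last t (r.injective ht)
  · intro r hr r' hr' hlast
    have hinit : Fin.init r = Fin.init r' := congrArg DFunLike.coe
      ((Finset.mem_filter.1 hr).2.trans (Finset.mem_filter.1 hr').2.symm)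
    apply DFunLike.coe_injective
    rw [← Fin.snoc_init_self r, ← Fin.snoc_init_self r', hinit, hlast]
  · intro a ha
    have ha' : a ∉ Set.range e := by simpa using ha
    exact ⟨Fin.Embedding.snoc e ha', by simp [Fin.Embedding.init_snoc], Fin.Embedding.snoc_last⟩

section MissProb

open Finset

variable {α 𝕜 : Type*} [Fintype α] [DecidableEq α] [Semifield 𝕜]

/-- Probability that an item of weight `x`, competing with the items of `D` (of weights `w`), is
missed by the first `ℓ` choices without replacement. The item itself is kept out of `D`, so that
only its weight enters. -/
noncomputable def missProb (w : α → 𝕜) (ℓ : ℕ) (D : Finset α) (x : 𝕜) : 𝕜 :=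
  ∑ r : Fin ℓ ↪ α with ∀ t, r t ∈ D, ∏ t, w (r t) / (x + ∑ a ∈ D \ (Iio t).image r, w a)

variable [LinearOrder 𝕜] [IsStrictOrderedRing 𝕜] {w : α → 𝕜} {ℓ : ℕ} {D : Finset α}

theorem antitoneOn_missProb (hw : ∀ a ∈ D, 0 ≤ w a) :
    AntitoneOn (missProb w ℓ D) (Set.Ioi 0) := by
  intro x (hx : 0 < x) y (hy : 0 < y) hxy
  refine sum_le_sum fun r hr => ?_
  have hrD : ∀ t, r t ∈ D := (mem_filter.1 hr).2
  have hS (t : Fin ℓ) : 0 ≤ ∑ a ∈ D \ (Iio t).image r, w a :=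
    sum_nonneg fun a ha => hw a (mem_sdiff.1 ha).1
  refine prod_le_prod (fun t _ => div_nonneg (hw _ (hrD t)) (add_nonneg hy.le (hS t))) fun t _ => ?_
  exact div_le_div_of_nonneg_left (hw _ (hrD t)) (add_pos_of_pos_of_nonneg hx (hS t))
    (add_le_add_left hxy _)

theorem strictAntiOn_missProb (hw : ∀ a ∈ D, 0 < w a) (hℓ : 1 ≤ ℓ) (hℓD : ℓ ≤ #D) :
    StrictAntiOn (missProb w ℓ D) (Set.Ioi 0) := by
  intro x (hx : 0 < x) y (hy : 0 < y) hxy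
  obtain ⟨e⟩ : Nonempty (Fin ℓ ↪ D) :=
    Function.Embedding.nonempty_of_card_le (by simpa using hℓD)
  have hne : ({r : Fin ℓ ↪ α | ∀ t, r t ∈ D} : Finset _).Nonempty :=
    ⟨e.trans (Function.Embedding.subtype _), by simp⟩
  refine sum_lt_sum_of_nonempty hne fun r hr => ?_
  have hrD : ∀ t, r t ∈ D := (mem_filter.1 hr).2
  have hS (t : Fin ℓ) : 0 ≤ ∑ a ∈ D \ (Iio t).image r, w a :=
    sum_nonneg fun a ha => (hw a (mem_sdiff.1 ha).1).le
  refine prod_lt_prod_of_nonempty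
    (fun t _ => div_pos (hw _ (hrD t)) (add_pos_of_pos_of_nonneg hy (hS t))) (fun t _ => ?_)
    ⟨⟨0, hℓ⟩, mem_univ _⟩
  exact div_lt_div_of_pos_left (hw _ (hrD t)) (add_pos_of_pos_of_nonneg hx (hS t))
    (add_lt_add_left hxy _)

end MissProb

section PlackettLuce

open Finset

variable {n k ℓ : ℕ} {u : Fin n → ℝ} {i : Fin n} {C : Finset (Fin n)}

theorem prPL_succ (r : Fin (k + 1) ↪ Fin n) :
    prPL n (k + 1) u r C = prPL n k u (Fin.Embedding.init r) C *
      if r (Fin.last k) ∈ C then Real.exp (u (r (Fin.last k))) /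
        ∑ a ∈ C \ univ.image (Fin.Embedding.init r), Real.exp (u a) else 0 := by
  have himage_last : (Iio (Fin.last k)).image r = univ.image (Fin.Embedding.init r) := by
    rw [Fin.Iio_last_eq_map, map_eq_image, image_image]
    rfl
  have himage_castSucc (t : Fin k) :
      (Iio t.castSucc).image r = (Iio t).image (Fin.Embedding.init r) := by
    rw [Fin.Iio_castSucc, map_eq_image, image_image]
    rfl
  simp only [prPL, ite_zero_mul_ite_zero, Fin.forall_fin_succ', Fin.prod_univ_castSucc,
    himage_last, himage_castSucc]
  rfl

theorem sum_prPL_of_init_eq (hk : k < #C) (e : Fin k ↪ Fin n) :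
    ∑ r with Fin.Embedding.init r = e, prPL n (k + 1) u r C = prPL n k u e C := by
  set S := ∑ a ∈ C \ univ.image e, Real.exp (u a)
  have hrest : (C \ univ.image e).Nonempty :=
    sdiff_nonempty_of_card_lt_card (by simpa [card_image_of_injective _ e.injective] using hk)
  have hS0 : S ≠ 0 := (sum_pos (fun a _ => Real.exp_pos (u a)) hrest).ne'
  calc ∑ r with Fin.Embedding.init r = e, prPL n (k + 1) u r C
    _ = ∑ r with Fin.Embedding.init r = e, prPL n k u e C *
          if r (Fin.last k) ∈ C then Real.exp (u (r (Fin.last k))) / S else 0 :=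
      sum_congr rfl fun r hr => by rw [prPL_succ, (mem_filter.1 hr).2]
    _ = prPL n k u e C * ∑ a ∈ C \ univ.image e, Real.exp (u a) / S := by
      rw [← mul_sum, sum_apply_last_of_init_eq e fun a => if a ∈ C then Real.exp (u a) / S else 0,
        sum_ite_mem, inter_comm, ← sdiff_eq_inter_compl]
    _ = prPL n k u e C := by rw [← sum_div, div_self hS0, mul_one]

theorem prPLset_filter_init_mem (hk : k < #C) (R : Finset (Fin k ↪ Fin n)) :
    prPLset n (k + 1) u {r | Fin.Embedding.init r ∈ R} C = prPLset n k u R C := by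
  simp only [prPLset, ← sum_prPL_of_init_eq hk]
  exact (sum_fiberwise_eq_sum_filter _ _ _ _).symm

theorem prPLset_univ_eq_one (hk : k ≤ #C) : prPLset n k u univ C = 1 := by
  induction k with
  | zero => simp [prPLset, prPL]
  | succ k ih => simpa [ih (Nat.le_of_succ_le hk)] using prPLset_filter_init_mem (u := u) hk univ

theorem topSet_succ (hℓk : ℓ ≤ k) :
    topSet n (k + 1) i ℓ = univ.filter (Fin.Embedding.init · ∈ topSet n k i ℓ) := by
  ext r
  simp only [topSet, mem_filter_univ, Fin.exists_fin_succ', Fin.val_last, Fin.val_castSucc,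
    hℓk.not_gt, false_and, or_false]
  rfl

theorem prPLset_topSet_eq_of_le (hℓk : ℓ ≤ k) (hk : k ≤ #C) :
    prPLset n k u (topSet n k i ℓ) C = prPLset n ℓ u (topSet n ℓ i ℓ) C := by
  induction k, hℓk using Nat.le_induction with
  | base => rfl
  | succ k hℓk ih => rw [topSet_succ hℓk, prPLset_filter_init_mem hk, ih (Nat.le_of_succ_le hk)]

theorem prPLset_compl_topSet_eq_missProb (hi : i ∈ C) :
    prPLset n ℓ u (topSet n ℓ i ℓ)ᶜ C =
      missProb (fun a => Real.exp (u a)) ℓ (C.erase i) (Real.exp (u i)) := by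
  have hmem (r : Fin ℓ ↪ Fin n) :
      (r ∈ (topSet n ℓ i ℓ)ᶜ ∧ ∀ t, r t ∈ C) ↔ ∀ t, r t ∈ C.erase i := by
    simp only [topSet, mem_compl, mem_filter_univ, Fin.is_lt, true_and, not_exists, mem_erase,
      ne_eq, forall_and]
  simp only [prPLset, prPL, missProb]
  rw [← sum_filter, ← filter_univ_mem (topSet n ℓ i ℓ)ᶜ, filter_filter,
    filter_congr fun r _ => hmem r]
  refine sum_congr rfl fun r hr => prod_congr rfl fun t _ => ?_
  have hi_prefix : i ∉ (Iio t).image r := fun h => by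
    obtain ⟨s, -, hs⟩ := mem_image.1 h
    exact ne_of_mem_erase ((mem_filter.1 hr).2 s) hs
  rw [← add_sum_erase _ _ (mem_sdiff.2 ⟨hi, hi_prefix⟩), erase_sdiff_comm]

theorem prPLset_topSet_eq_one_sub_missProb (hi : i ∈ C) (hℓk : ℓ ≤ k) (hk : k ≤ #C) :
    prPLset n k u (topSet n k i ℓ) C =
      1 - missProb (fun a => Real.exp (u a)) ℓ (C.erase i) (Real.exp (u i)) := by
  rw [prPLset_topSet_eq_of_le hℓk hk, ← prPLset_univ_eq_one (u := u) (hℓk.trans hk),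
    ← prPLset_compl_topSet_eq_missProb hi]
  exact eq_sub_of_add_eq (sum_add_sum_compl _ _)

end PlackettLuce

/-- If `u i > u j`, `i ∈ C`, `j ∉ C` and `ℓ ≤ k ≤ |C|`, then `i` is at least as likely to be in
the top `ℓ` positions with consideration set `C` as `j` is with `C` where `i` is replaced by `j`,
and strictly more likely unless `ℓ = 0` or `ℓ = |C|`. -/
theorem pl_top_l (n k ℓ : ℕ) (u : Fin n → ℝ) (i j : Fin n) (C : Finset (Fin n))
    (hu : u i > u j) (hiC : i ∈ C) (hjC : j ∉ C) (hℓk : ℓ ≤ k) (hkC : k ≤ C.card) :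
    prPLset n k u (topSet n k i ℓ) C ≥
        prPLset n k u (topSet n k j ℓ) (insert j (C.erase i)) ∧
      (1 ≤ ℓ → ℓ < C.card →
        prPLset n k u (topSet n k i ℓ) C >
          prPLset n k u (topSet n k j ℓ) (insert j (C.erase i))) := by
  have hjD : j ∉ C.erase i := fun h => hjC (Finset.mem_of_mem_erase h)
  have hcard : (C.erase i).card + 1 = C.card := Finset.card_erase_add_one hiC
  have hcard' : (insert j (C.erase i)).card = C.card := by
    rw [Finset.card_insert_of_notMem hjD, hcard]
  have hexp (a : Fin n) : 0 < Real.exp (u a) := Real.exp_pos (u a)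
  have hij : Real.exp (u j) < Real.exp (u i) := Real.exp_lt_exp.2 hu
  rw [prPLset_topSet_eq_one_sub_missProb hiC hℓk hkC,
    prPLset_topSet_eq_one_sub_missProb (Finset.mem_insert_self _ _) hℓk (hkC.trans_eq hcard'.symm),
    Finset.erase_insert hjD]
  refine ⟨sub_le_sub_left ?_ 1, fun hℓ hℓC => sub_lt_sub_left ?_ 1⟩
  · exact antitoneOn_missProb (fun a _ => (hexp a).le) (hexp j) (hexp i) hij.le
  · exact strictAntiOn_missProb (fun a _ => hexp a) hℓ (by omega) (hexp j) (hexp i) hij
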